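/- arXiv:2106.01155 — 2 statements merged into one kernel-verified Lean document; each statement's English description precedes it below -/
import Mathlib

section
/- Let M be a Malcev algebra over F lying in the variety H, containing L = sl2(F), and such that mL ≠ 0 for every nonzero m ∈ M. Then N_M is a subalgebra of M (i.e., the product of any two elements of N_M lies in N_M) and N_M·J_M ⊆ J_M. -/
section
variable {K : Type*} [Field K] {M : Type*} [AddCommGroup M] [Module K M]

/-- the Jacobian `J(x,y,z) = (xy)z + (yz)x + (zx)y` -/
def mjac (μ : M →ₗ[K] M →ₗ[K] M) (x y z : M) : M :=
  μ (μ x y) z + μ (μ y z) x + μ (μ z x) y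

/-- `{x,y,z} = (xy)z − (xz)y + 2·x(yz)` -/
def mbr (μ : M →ₗ[K] M →ₗ[K] M) (x y z : M) : M :=
  μ (μ x y) z - μ (μ x z) y + (2 : K) • μ x (μ y z)

/-- `h(y,z,t,x,u) = {yz,t,u}x + {yz,t,x}u + {yx,z,u}t + {yu,z,x}t` -/
def mh (μ : M →ₗ[K] M →ₗ[K] M) (y z t x u : M) : M :=
  μ (mbr μ (μ y z) t u) x + μ (mbr μ (μ y z) t x) u +
    μ (mbr μ (μ y x) z u) t + μ (mbr μ (μ y u) z x) t

/-- A Malcev algebra structure: anticommutative (`x·x = 0`) together with the Malcev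
identity `(xz)(yt) = ((xy)z)t + ((yz)t)x + ((zt)x)y + ((tx)y)z`. -/
def IsMalcev (μ : M →ₗ[K] M →ₗ[K] M) : Prop :=
  (∀ x, μ x x = 0) ∧
    ∀ x y z t, μ (μ x z) (μ y t) =
      μ (μ (μ x y) z) t + μ (μ (μ y z) t) x + μ (μ (μ z t) x) y + μ (μ (μ t x) y) z

/-- the variety 𝓗 : `h(y,z,t,x,u) = 0` identically -/
def InVarietyH (μ : M →ₗ[K] M →ₗ[K] M) : Prop := ∀ y z t x u, mh μ y z t x u = 0

/-- `N_M = {m | J(m,a,b) = 0 ∀ a,b ∈ L}` -/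
def NMset (μ : M →ₗ[K] M →ₗ[K] M) (L : Submodule K M) : Set M :=
  {m : M | ∀ a ∈ L, ∀ b ∈ L, mjac μ m a b = 0}

/-- `J_M = {m | {m,a,b} = 0 ∀ a,b ∈ L}` -/
def JMset (μ : M →ₗ[K] M →ₗ[K] M) (L : Submodule K M) : Set M :=
  {m : M | ∀ a ∈ L, ∀ b ∈ L, mbr μ m a b = 0}

/-!
For `a, b ∈ L` the Jacobian has the form `J(m,a,b) = -3 π(m)(ab)`, where `π(m) = -(2/3) J(m,E,F)H`
is an idempotent commuting with right multiplications by `L`. Hence `N_M = ker π`, and `J_M` is the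
range of `π` once `mL ≠ 0` for all `m ≠ 0`. With `R_a` denoting right multiplication by `a`, one has
`[R_a, R_b] = R_{ab}` on `ker π` and `[R_a, R_b] = -2 R_{ab}` on the range of `π`. The derivation
`D_{a,b} = [R_a, R_b] + R_{ab}` maps `m` to `(2m - 3π(m))(ab)`, so `m ↦ (2m - 3π(m))c` is a
derivation for every `c ∈ L`. One has to show that `f(x,y) = π(xy)` vanishes for `x, y ∈ N_M`, and
`f(x,y) = xy - π(xy)` for `x ∈ N_M`, `y ∈ J_M`. In both cases the derivation rule and the Malcev
identity for `(xy)(aa) = 0` show that `f` is balanced, `f(xa,y) = f(x,ya)`, so that `f(x,y)c` is a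
scalar multiple of `f(xc,y)`. The two commutator relations then disagree unless `f = 0`.
-/

section Identities

variable {μ : M →ₗ[K] M →ₗ[K] M}

theorem mjac_add_left (m n a b : M) : mjac μ (m + n) a b = mjac μ m a b + mjac μ n a b := by
  simp only [mjac, map_add, LinearMap.add_apply]; abel

theorem mjac_smul_left (r : K) (m a b : M) : mjac μ (r • m) a b = r • mjac μ m a b := by
  simp only [mjac, map_smul, LinearMap.smul_apply, smul_add]

variable (μ) in
/-- The Jacobian `J(m,a,b)` as a bilinear map in `a` and `b`. -/
def mjacBilin (m : M) : M →ₗ[K] M →ₗ[K] M :=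
  LinearMap.mk₂ K (mjac μ m)
    (fun _ _ _ => by simp only [mjac, map_add, LinearMap.add_apply]; abel)
    (fun _ _ _ => by simp only [mjac, map_smul, LinearMap.smul_apply, smul_add])
    (fun _ _ _ => by simp only [mjac, map_add, LinearMap.add_apply]; abel)
    (fun _ _ _ => by simp only [mjac, map_smul, LinearMap.smul_apply, smul_add])

theorem mjac_neg_right (m a b : M) : mjac μ m a (-b) = -mjac μ m a b :=
  map_neg (mjacBilin μ m a) b

theorem mjac_smul_right (m a b : M) (r : K) : mjac μ m a (r • b) = r • mjac μ m a b :=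
  map_smul (mjacBilin μ m a) r b

theorem mjac_zero_right (m a : M) : mjac μ m a 0 = 0 :=
  map_zero (mjacBilin μ m a)

variable (μ) in
/-- The operator `D_{a,b} = [R_a, R_b] + R_{ab}`, where `R_a` is right multiplication by `a`
and operators act from the right; in a Malcev algebra it is a derivation. -/
def innerDer (a b m : M) : M :=
  μ (μ m a) b - μ (μ m b) a + μ m (μ a b)

namespace IsMalcev

theorem anticomm (hMal : IsMalcev μ) (x y : M) : μ x y = -μ y x :=
  (LinearMap.IsAlt.neg (B := μ) hMal.1 y x).symm

theorem mjac_eq (hMal : IsMalcev μ) (m a b : M) :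
    mjac μ m a b = μ (μ m a) b - μ (μ m b) a - μ m (μ a b) := by
  simp only [mjac, hMal.anticomm b m, hMal.anticomm _ m, map_neg, LinearMap.neg_apply]
  abel

theorem mjac_self (hMal : IsMalcev μ) (m a : M) : mjac μ m a a = 0 := by
  simp only [hMal.mjac_eq, hMal.1, map_zero, sub_self]

theorem mjac_self_left (hMal : IsMalcev μ) (a b : M) : mjac μ a a b = 0 := by
  rw [hMal.mjac_eq, hMal.1, map_zero, LinearMap.zero_apply, hMal.anticomm _ a]
  abel

theorem mjac_swap_left (hMal : IsMalcev μ) (a b c : M) : mjac μ a b c = -mjac μ b a c := by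
  simp only [mjac, hMal.anticomm b a, hMal.anticomm c, map_neg, LinearMap.neg_apply]
  abel

theorem mjac_swap (hMal : IsMalcev μ) (m a b : M) : mjac μ m a b = -mjac μ m b a := by
  rw [hMal.mjac_eq, hMal.mjac_eq, hMal.anticomm a b, map_neg]
  abel

theorem mbr_eq (hMal : IsMalcev μ) (m a b : M) :
    mbr μ m a b = mjac μ m a b + (3 : K) • μ m (μ a b) := by
  rw [mbr, hMal.mjac_eq]
  module

theorem innerDer_eq (hMal : IsMalcev μ) (a b m : M) :
    innerDer μ a b m = mjac μ m a b + (2 : K) • μ m (μ a b) := by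
  rw [innerDer, hMal.mjac_eq]
  module

/-- A linearization of Sagle's identity `J(x,y,xz) = J(x,y,z)x`. -/
theorem mjac_mul (hMal : IsMalcev μ) (m a b c : M) :
    mjac μ (μ m c) a b = μ (mjac μ m b c) a + μ (mjac μ a b c) m - mjac μ m b (μ a c) := by
  have h₁ := hMal.2 m a b c
  have h₂ := hMal.2 a m b c
  simp only [mjac, hMal.anticomm c, hMal.anticomm b (μ _ _), hMal.anticomm a m, map_add, map_neg,
    LinearMap.add_apply, LinearMap.neg_apply] at h₁ h₂ ⊢
  linear_combination (norm := module) h₁ + h₂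

theorem mjac_mul_self (hMal : IsMalcev μ) (m a c : M) :
    mjac μ m a (μ a c) = μ (mjac μ m a c) a := by
  have h := hMal.mjac_mul m a a c
  rw [hMal.mjac_self, hMal.mjac_self_left, map_zero, LinearMap.zero_apply, add_zero] at h
  exact (sub_eq_zero.1 h.symm).symm

theorem mjac_mul_add_mjac_mul (hMal : IsMalcev μ) (m a b c : M) :
    mjac μ m a (μ b c) + mjac μ m b (μ a c) = μ (mjac μ m a c) b + μ (mjac μ m b c) a := by
  have h := hMal.mjac_swap (μ m c) a b
  rw [hMal.mjac_mul, hMal.mjac_mul, hMal.mjac_swap_left a b c, map_neg, LinearMap.neg_apply] at h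
  linear_combination (norm := module) -h

theorem innerDer_mul (hMal : IsMalcev μ) (a b x y : M) :
    innerDer μ a b (μ x y) = μ (innerDer μ a b x) y + μ x (innerDer μ a b y) := by
  have h₁ := hMal.2 x y b a
  have h₂ := hMal.2 x a b y
  have h₃ := hMal.2 x a y b
  simp only [innerDer, hMal.anticomm _ x, hMal.anticomm a y, hMal.anticomm b y,
    hMal.anticomm (μ _ _) y, hMal.anticomm b a, map_neg, map_add, map_sub, LinearMap.add_apply,
    LinearMap.sub_apply, LinearMap.neg_apply] at h₁ h₂ h₃ ⊢
  linear_combination (norm := module) h₂ + h₁ + h₃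

/-- The Malcev identity for `(xy)(aa) = 0`. -/
theorem mul_mul_self (hMal : IsMalcev μ) (x y a : M) :
    μ (μ (μ x a) y) a + μ x (μ (μ y a) a) = μ (μ x (μ y a)) a + μ (μ (μ x a) a) y := by
  have h := hMal.2 x a y a
  simp only [hMal.1, hMal.anticomm _ x, hMal.anticomm a y, map_neg, LinearMap.neg_apply,
    map_zero] at h
  linear_combination (norm := module) -h

end IsMalcev

end Identities

/-- `L` is a copy of `sl₂` in the Malcev algebra `(M, μ)`: it is spanned by elements `E, H, F`
multiplying as the standard basis. The characteristic being different from `2` and `3` is bundled;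
linear independence is not, so `L = 0` is allowed. -/
structure IsSlTwo (μ : M →ₗ[K] M →ₗ[K] M) (L : Submodule K M) (E H F : M) : Prop where
  two_ne_zero : (2 : K) ≠ 0
  three_ne_zero : (3 : K) ≠ 0
  isMalcev : IsMalcev μ
  span_eq : L = Submodule.span K {E, H, F}
  EH : μ E H = E
  FH : μ F H = -F
  EF : μ E F = (2⁻¹ : K) • H

section SlTwo

variable {μ : M →ₗ[K] M →ₗ[K] M} {L : Submodule K M} {E H F : M}

theorem isAlt_eq_zero_of_mem_span_triple {V : Type*} [AddCommGroup V] [Module K V]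
    {B : M →ₗ[K] M →ₗ[K] V} (hB : B.IsAlt) (hEH : B E H = 0) (hEF : B E F = 0) (hHF : B H F = 0)
    {a b : M} (ha : a ∈ Submodule.span K {E, H, F})
    (hb : b ∈ Submodule.span K {E, H, F}) : B a b = 0 := by
  obtain ⟨a₁, a₂, a₃, rfl⟩ := Submodule.mem_span_triple.1 ha
  obtain ⟨b₁, b₂, b₃, rfl⟩ := Submodule.mem_span_triple.1 hb
  simp [hB.self_eq_zero, hEH, hEF, hHF, ← hB.neg E H, ← hB.neg E F, ← hB.neg H F]

variable (μ E H F) in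
/-- The map `m ↦ -(2/3) J(m,E,F)H`: the projection `π` of `M` along `N_M` onto a
submodule of `J_M`, equal to `J_M` when `mL ≠ 0` for all `m ≠ 0`. -/
def malcevProj : M →ₗ[K] M where
  toFun m := (-(2 / 3) : K) • μ (mjac μ m E F) H
  map_add' m n := by rw [mjac_add_left, map_add, LinearMap.add_apply, smul_add]
  map_smul' r m := by
    rw [mjac_smul_left, map_smul, LinearMap.smul_apply, smul_comm, RingHom.id_apply]

local notation "π" => malcevProj μ E H F

variable (μ E H F) in
/-- The projection `m ↦ m - π(m)` of `M` onto `N_M`, complementary to `malcevProj`. -/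
def malcevCoproj : M →ₗ[K] M := LinearMap.id - π

local notation "ρ" => malcevCoproj μ E H F

theorem malcevProj_apply (m : M) : π m = (-(2 / 3) : K) • μ (mjac μ m E F) H := rfl

theorem malcevCoproj_apply (m : M) : ρ m = m - π m := rfl

namespace IsSlTwo

theorem E_mem (hs : IsSlTwo μ L E H F) : E ∈ L :=
  hs.span_eq ▸ Submodule.subset_span (by simp)

theorem H_mem (hs : IsSlTwo μ L E H F) : H ∈ L :=
  hs.span_eq ▸ Submodule.subset_span (by simp)

theorem F_mem (hs : IsSlTwo μ L E H F) : F ∈ L :=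
  hs.span_eq ▸ Submodule.subset_span (by simp)

theorem HE (hs : IsSlTwo μ L E H F) : μ H E = -E := by
  rw [hs.isMalcev.anticomm, hs.EH]

theorem HF (hs : IsSlTwo μ L E H F) : μ H F = F := by
  rw [hs.isMalcev.anticomm, hs.FH, neg_neg]

theorem FE (hs : IsSlTwo μ L E H F) : μ F E = (-2⁻¹ : K) • H := by
  rw [hs.isMalcev.anticomm, hs.EF, neg_smul]

/-- The automorphism `E ↔ F`, `H ↦ -H` of `sl₂` transports facts about `E` to facts about `F`. -/
theorem symm (hs : IsSlTwo μ L E H F) : IsSlTwo μ L F (-H) E where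
  two_ne_zero := hs.two_ne_zero
  three_ne_zero := hs.three_ne_zero
  isMalcev := hs.isMalcev
  span_eq := by
    rw [hs.span_eq]
    simp only [Submodule.span_insert, ← Set.neg_singleton, Submodule.span_neg]
    rw [sup_left_comm, sup_comm (Submodule.span K {E}), sup_left_comm]
  EH := by rw [map_neg, hs.FH, neg_neg]
  FH := by rw [map_neg, hs.EH]
  EF := by rw [hs.FE, neg_smul, smul_neg]

theorem malcevProj_symm (hs : IsSlTwo μ L E H F) : malcevProj μ F (-H) E = π := by
  ext m
  simp only [malcevProj_apply, hs.isMalcev.mjac_swap m F E, map_neg, LinearMap.neg_apply, neg_neg]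

theorem le_of_forall_mul_mem (hs : IsSlTwo μ L E H F) {S : Submodule K M}
    (hS : ∀ a ∈ L, ∀ b ∈ L, μ a b ∈ S) : L ≤ S := by
  have hE := hS E hs.E_mem H hs.H_mem
  have hH := S.smul_mem 2 (hS E hs.E_mem F hs.F_mem)
  have hF := hS H hs.H_mem F hs.F_mem
  rw [hs.EH] at hE
  rw [hs.EF, smul_inv_smul₀ hs.two_ne_zero] at hH
  rw [hs.HF] at hF
  rw [hs.span_eq, Submodule.span_le]
  rintro _ (rfl | rfl | rfl) <;> assumption

theorem mul_mem (hs : IsSlTwo μ L E H F) {a b : M} (ha : a ∈ L) (hb : b ∈ L) : μ a b ∈ L := by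
  have hB : (μ.compr₂ L.mkQ).IsAlt := fun x => by
    rw [LinearMap.compr₂_apply, hs.isMalcev.1, map_zero]
  have hbasis {c d : M} (hcd : μ c d ∈ L) : μ.compr₂ L.mkQ c d = 0 := by
    rwa [LinearMap.compr₂_apply, Submodule.mkQ_apply, Submodule.Quotient.mk_eq_zero]
  have h := isAlt_eq_zero_of_mem_span_triple hB (hbasis (hs.EH.symm ▸ hs.E_mem))
    (hbasis (hs.EF.symm ▸ L.smul_mem _ hs.H_mem)) (hbasis (hs.HF.symm ▸ hs.F_mem))
    (hs.span_eq ▸ ha) (hs.span_eq ▸ hb)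
  rwa [LinearMap.compr₂_apply, Submodule.mkQ_apply, Submodule.Quotient.mk_eq_zero] at h

theorem mjac_E_H_F (hs : IsSlTwo μ L E H F) : mjac μ E H F = 0 := by
  simp only [mjac, hs.EH, hs.HF, hs.FE, hs.EF, map_smul, LinearMap.smul_apply, hs.isMalcev.1,
    smul_zero, add_zero, neg_smul, map_neg, LinearMap.neg_apply, neg_zero, add_neg_cancel]

theorem mjac_E_H_mul_H (hs : IsSlTwo μ L E H F) (m : M) : μ (mjac μ m E H) H = -mjac μ m E H := by
  have h := hs.isMalcev.mjac_mul_self m H E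
  rw [hs.HE, mjac_neg_right, hs.isMalcev.mjac_swap m H E, map_neg, LinearMap.neg_apply,
    neg_neg] at h
  exact neg_eq_iff_eq_neg.1 h.symm

theorem mjac_E_F_mul_E (hs : IsSlTwo μ L E H F) (m : M) :
    μ (mjac μ m E F) E = (2⁻¹ : K) • mjac μ m E H := by
  rw [← hs.isMalcev.mjac_mul_self, hs.EF, mjac_smul_right]

theorem mjac_H_F_mul_E (hs : IsSlTwo μ L E H F) (m : M) :
    μ (mjac μ m H F) E = mjac μ m E F - μ (mjac μ m E F) H := by
  have h := hs.isMalcev.mjac_mul_add_mjac_mul m E H F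
  rw [hs.HF, hs.EF, mjac_smul_right, hs.isMalcev.mjac_self, smul_zero, add_zero] at h
  exact eq_sub_of_add_eq' h.symm

theorem mjac_mul_H_E_F (hs : IsSlTwo μ L E H F) (m : M) :
    mjac μ (μ m H) E F = μ (mjac μ m E F) H := by
  have hEFH : mjac μ E F H = 0 := by
    rw [hs.isMalcev.mjac_swap, hs.mjac_E_H_F, neg_zero]
  rw [hs.isMalcev.mjac_mul, hEFH, hs.EH, hs.isMalcev.mjac_swap m F H,
    hs.isMalcev.mjac_swap m F E, map_neg, map_zero, LinearMap.neg_apply, LinearMap.zero_apply,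
    hs.mjac_H_F_mul_E]
  abel

theorem mjac_mul_E_E_F (hs : IsSlTwo μ L E H F) (m : M) :
    mjac μ (μ m E) E F = -μ (mjac μ m E F) E := by
  have hEFE : mjac μ E F E = 0 := by
    rw [hs.isMalcev.mjac_swap, hs.isMalcev.mjac_self_left, neg_zero]
  rw [hs.isMalcev.mjac_mul, hEFE, hs.isMalcev.1, mjac_zero_right, hs.isMalcev.mjac_swap m F E,
    map_neg, map_zero, LinearMap.neg_apply, LinearMap.zero_apply, add_zero, sub_zero]

theorem mjac_mul_H_E_H (hs : IsSlTwo μ L E H F) (m : M) : mjac μ (μ m H) E H = mjac μ m E H := by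
  have hEHH : mjac μ E H H = 0 := hs.isMalcev.mjac_self E H
  rw [hs.isMalcev.mjac_mul, hEHH, hs.isMalcev.mjac_self, hs.EH, hs.isMalcev.mjac_swap m H E]
  simp only [map_zero, LinearMap.zero_apply, zero_add, zero_sub, neg_neg]

theorem malcevProj_mul_H (hs : IsSlTwo μ L E H F) (m : M) : π (μ m H) = μ (π m) H := by
  rw [malcevProj_apply, malcevProj_apply, hs.mjac_mul_H_E_F, map_smul, LinearMap.smul_apply]

theorem mjac_E_H_eq (hs : IsSlTwo μ L E H F) (m : M) : mjac μ m E H = (-3 : K) • μ (π m) E := by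
  rw [malcevProj_apply, ← hs.mjac_mul_H_E_F, map_smul, LinearMap.smul_apply,
    hs.mjac_E_F_mul_E, hs.mjac_mul_H_E_H]
  have h2 := hs.two_ne_zero
  have h3 := hs.three_ne_zero
  match_scalars
  field_simp

theorem mjac_H_F_eq (hs : IsSlTwo μ L E H F) (m : M) : mjac μ m H F = (-3 : K) • μ (π m) F := by
  rw [← hs.malcevProj_symm, ← hs.symm.mjac_E_H_eq, mjac_neg_right, ← hs.isMalcev.mjac_swap]

theorem malcevProj_mul_E (hs : IsSlTwo μ L E H F) (m : M) : π (μ m E) = μ (π m) E := by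
  refine (smul_right_inj (neg_ne_zero.2 hs.three_ne_zero)).1 ?_
  rw [← hs.mjac_E_H_eq, malcevProj_apply, hs.mjac_mul_E_E_F, hs.mjac_E_F_mul_E, map_neg, map_smul,
    LinearMap.neg_apply, LinearMap.smul_apply, hs.mjac_E_H_mul_H]
  have h2 := hs.two_ne_zero
  have h3 := hs.three_ne_zero
  match_scalars
  field_simp

theorem malcevProj_mul_F (hs : IsSlTwo μ L E H F) (m : M) : π (μ m F) = μ (π m) F := by
  rw [← hs.malcevProj_symm, hs.symm.malcevProj_mul_E]

theorem malcevProj_mul (hs : IsSlTwo μ L E H F) (m : M) {a : M} (ha : a ∈ L) :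
    π (μ m a) = μ (π m) a := by
  obtain ⟨α, β, γ, rfl⟩ := Submodule.mem_span_triple.1 (hs.span_eq ▸ ha)
  simp only [map_add, map_smul, hs.malcevProj_mul_E, hs.malcevProj_mul_H, hs.malcevProj_mul_F]

theorem three_smul_malcevProj_commutator (hs : IsSlTwo μ L E H F) (m : M) :
    (3 : K) • (μ (μ (π m) E) F - μ (μ (π m) F) E) = (2 : K) • mjac μ m E F := by
  have hFE := hs.mjac_H_F_mul_E m
  have hEF := hs.symm.mjac_H_F_mul_E m
  rw [hs.isMalcev.mjac_swap m (-H) E, mjac_neg_right, hs.isMalcev.mjac_swap m F E, neg_neg, map_neg,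
    map_neg, LinearMap.neg_apply, neg_neg, hs.mjac_E_H_eq, map_smul, LinearMap.smul_apply] at hEF
  rw [hs.mjac_H_F_eq, map_smul, LinearMap.smul_apply] at hFE
  linear_combination (norm := module) hFE - hEF

theorem malcevProj_mul_E_mul_H (hs : IsSlTwo μ L E H F) (m : M) : μ (μ (π m) E) H = -μ (π m) E := by
  have h := hs.mjac_E_H_mul_H m
  rw [hs.mjac_E_H_eq, map_smul, LinearMap.smul_apply, ← smul_neg] at h
  exact (smul_right_inj (neg_ne_zero.2 hs.three_ne_zero)).1 h

theorem malcevProj_mul_H_mul_E (hs : IsSlTwo μ L E H F) (m : M) : μ (μ (π m) H) E = μ (π m) E := by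
  have h := hs.mjac_mul_H_E_H m
  rw [hs.mjac_E_H_eq, hs.mjac_E_H_eq, hs.malcevProj_mul_H] at h
  exact (smul_right_inj (neg_ne_zero.2 hs.three_ne_zero)).1 h

theorem malcevProj_malcevProj_mul_E (hs : IsSlTwo μ L E H F) (m : M) :
    μ (π (π m)) E = μ (π m) E := by
  refine (smul_right_inj (neg_ne_zero.2 hs.three_ne_zero)).1 ?_
  rw [← hs.mjac_E_H_eq, hs.isMalcev.mjac_eq, hs.malcevProj_mul_E_mul_H, hs.malcevProj_mul_H_mul_E,
    hs.EH]
  module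

theorem malcevProj_malcevProj_mul_F (hs : IsSlTwo μ L E H F) (m : M) :
    μ (π (π m)) F = μ (π m) F := by
  rw [← hs.malcevProj_symm, hs.symm.malcevProj_malcevProj_mul_E]

theorem mjac_malcevProj_E_F (hs : IsSlTwo μ L E H F) (m : M) : mjac μ (π m) E F = mjac μ m E F := by
  refine (smul_right_inj hs.two_ne_zero).1 ?_
  rw [← hs.three_smul_malcevProj_commutator, ← hs.three_smul_malcevProj_commutator,
    hs.malcevProj_malcevProj_mul_E, hs.malcevProj_malcevProj_mul_F]

theorem malcevProj_malcevProj (hs : IsSlTwo μ L E H F) (m : M) : π (π m) = π m := by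
  rw [malcevProj_apply (π m), hs.mjac_malcevProj_E_F, malcevProj_apply]

theorem mjac_E_F_eq (hs : IsSlTwo μ L E H F) (m : M) :
    mjac μ m E F = (-3 : K) • μ (π m) (μ E F) := by
  have h := hs.mjac_malcevProj_E_F m
  rw [hs.isMalcev.mjac_eq] at h
  linear_combination (norm := module) hs.three_smul_malcevProj_commutator m - (3 : K) • h

theorem mjac_eq (hs : IsSlTwo μ L E H F) (m : M) {a b : M} (ha : a ∈ L) (hb : b ∈ L) :
    mjac μ m a b = (-3 : K) • μ (π m) (μ a b) := by
  rw [hs.span_eq] at ha hb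
  let B : M →ₗ[K] M →ₗ[K] M := mjacBilin μ m + (3 : K) • μ.compr₂ (μ (π m))
  have hB : ∀ a b, B a b = mjac μ m a b + (3 : K) • μ (π m) (μ a b) := fun _ _ => rfl
  have hBab : B a b = 0 := by
    refine isAlt_eq_zero_of_mem_span_triple (fun a => ?_) ?_ ?_ ?_ ha hb
    · rw [hB, hs.isMalcev.mjac_self, hs.isMalcev.1, map_zero, smul_zero, add_zero]
    · rw [hB, hs.mjac_E_H_eq, hs.EH, neg_smul, neg_add_cancel]
    · rw [hB, hs.mjac_E_F_eq, neg_smul, neg_add_cancel]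
    · rw [hB, hs.mjac_H_F_eq, hs.HF, neg_smul, neg_add_cancel]
  rw [neg_smul]
  exact eq_neg_of_add_eq_zero_left hBab

theorem malcevProj_mul_H_mul_H (hs : IsSlTwo μ L E H F) (m : M) : μ (μ (π m) H) H = π m := by
  have h := malcevProj_apply (μ := μ) (E := E) (H := H) (F := F) m
  rw [hs.mjac_E_F_eq, hs.EF] at h
  simp only [map_smul, LinearMap.smul_apply, smul_smul] at h
  have hscalar : -(2 / 3 : K) * (-3 * 2⁻¹) = 1 := by
    have h2 := hs.two_ne_zero
    have h3 := hs.three_ne_zero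
    field_simp
  rw [hscalar, one_smul] at h
  exact h.symm

theorem malcevProj_eq_of_mul_H_eq (hs : IsSlTwo μ L E H F) {m n : M} (h : μ (π m) H = μ (π n) H) :
    π m = π n := by
  rw [← hs.malcevProj_mul_H_mul_H m, h, hs.malcevProj_mul_H_mul_H]

theorem malcevProj_mul_eq_zero_of_mem (hs : IsSlTwo μ L E H F) {m a : M} (hm : π m = 0)
    (ha : a ∈ L) : π (μ m a) = 0 := by
  rw [hs.malcevProj_mul m ha, hm, map_zero, LinearMap.zero_apply]

theorem malcevProj_mul_eq_self_of_mem (hs : IsSlTwo μ L E H F) {m a : M} (hm : π m = m)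
    (ha : a ∈ L) : π (μ m a) = μ m a := by
  rw [hs.malcevProj_mul m ha, hm]

theorem mul_H_mul_H_of_malcevProj_eq_self (hs : IsSlTwo μ L E H F) {m : M} (hm : π m = m) :
    μ (μ m H) H = m := by
  rw [← hm, hs.malcevProj_mul_H_mul_H]

theorem malcevCoproj_malcevProj (hs : IsSlTwo μ L E H F) (m : M) : ρ (π m) = 0 := by
  rw [malcevCoproj_apply, hs.malcevProj_malcevProj, sub_self]

theorem malcevProj_malcevCoproj (hs : IsSlTwo μ L E H F) (m : M) : π (ρ m) = 0 := by
  rw [malcevCoproj_apply, map_sub, hs.malcevProj_malcevProj, sub_self]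

theorem malcevCoproj_mul (hs : IsSlTwo μ L E H F) (m : M) {a : M} (ha : a ∈ L) :
    ρ (μ m a) = μ (ρ m) a := by
  rw [malcevCoproj_apply, malcevCoproj_apply, hs.malcevProj_mul m ha, map_sub, LinearMap.sub_apply]

theorem commutator_eq (hs : IsSlTwo μ L E H F) (m : M) {a b : M} (ha : a ∈ L) (hb : b ∈ L) :
    μ (μ m a) b - μ (μ m b) a = μ m (μ a b) - (3 : K) • μ (π m) (μ a b) := by
  linear_combination (norm := module) hs.mjac_eq m ha hb - hs.isMalcev.mjac_eq m a b

theorem commutator_eq_of_malcevProj_eq_zero (hs : IsSlTwo μ L E H F) {m a b : M} (hm : π m = 0)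
    (ha : a ∈ L) (hb : b ∈ L) : μ (μ m a) b - μ (μ m b) a = μ m (μ a b) := by
  rw [hs.commutator_eq m ha hb, hm, map_zero, LinearMap.zero_apply, smul_zero, sub_zero]

theorem commutator_eq_of_malcevProj_eq_self (hs : IsSlTwo μ L E H F) {m a b : M} (hm : π m = m)
    (ha : a ∈ L) (hb : b ∈ L) : μ (μ m a) b - μ (μ m b) a = (-2 : K) • μ m (μ a b) := by
  rw [hs.commutator_eq m ha hb, hm]
  module

theorem mem_NMset_iff (hs : IsSlTwo μ L E H F) {m : M} : m ∈ NMset μ L ↔ π m = 0 := by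
  refine ⟨fun hm => ?_, fun hm a ha b hb => ?_⟩
  · rw [malcevProj_apply, hm E hs.E_mem F hs.F_mem, map_zero, LinearMap.zero_apply, smul_zero]
  · rw [hs.mjac_eq m ha hb, hm, map_zero, LinearMap.zero_apply, smul_zero]

theorem mbr_eq (hs : IsSlTwo μ L E H F) (m : M) {a b : M} (ha : a ∈ L) (hb : b ∈ L) :
    mbr μ m a b = (3 : K) • μ (ρ m) (μ a b) := by
  rw [malcevCoproj_apply, hs.isMalcev.mbr_eq, hs.mjac_eq m ha hb, map_sub, LinearMap.sub_apply]
  module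

theorem mem_JMset_iff (hs : IsSlTwo μ L E H F) (hfaith : ∀ m : M, m ≠ 0 → ∃ a ∈ L, μ m a ≠ 0)
    {m : M} : m ∈ JMset μ L ↔ π m = m := by
  refine ⟨fun hm => ?_, fun hm a ha b hb => ?_⟩
  · have hker : L ≤ LinearMap.ker (μ (ρ m)) := hs.le_of_forall_mul_mem fun a ha b hb => by
      have h := hm a ha b hb
      rw [hs.mbr_eq m ha hb] at h
      exact (smul_eq_zero_iff_right hs.three_ne_zero).1 h
    by_contra hne
    obtain ⟨a, ha, hma⟩ := hfaith (ρ m) (sub_ne_zero.2 (Ne.symm hne))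
    exact hma (hker ha)
  · rw [hs.mbr_eq m ha hb, malcevCoproj_apply, hm, sub_self, map_zero,
      LinearMap.zero_apply, smul_zero]

theorem innerDer_eq (hs : IsSlTwo μ L E H F) (m : M) {a b : M} (ha : a ∈ L) (hb : b ∈ L) :
    innerDer μ a b m = μ ((2 : K) • m - (3 : K) • π m) (μ a b) := by
  rw [hs.isMalcev.innerDer_eq, hs.mjac_eq m ha hb]
  simp only [map_sub, map_smul, LinearMap.sub_apply, LinearMap.smul_apply]
  module

/-- The operator `m ↦ (2m - 3π(m))c` is a sum of derivations `D_{a,b}`, as `L` is spanned by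
products. -/
theorem leibniz_two_sub_three_malcevProj (hs : IsSlTwo μ L E H F) (x y : M) {c : M} (hc : c ∈ L) :
    μ ((2 : K) • μ x y - (3 : K) • π (μ x y)) c =
      μ (μ ((2 : K) • x - (3 : K) • π x) c) y + μ x (μ ((2 : K) • y - (3 : K) • π y) c) := by
  have hle : L ≤ LinearMap.eqLocus (μ ((2 : K) • μ x y - (3 : K) • π (μ x y)))
      (μ.flip y ∘ₗ μ ((2 : K) • x - (3 : K) • π x) + μ x ∘ₗ μ ((2 : K) • y - (3 : K) • π y)) :=
    hs.le_of_forall_mul_mem fun a ha b hb => by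
      have h := hs.isMalcev.innerDer_mul a b x y
      rwa [hs.innerDer_eq _ ha hb, hs.innerDer_eq _ ha hb, hs.innerDer_eq _ ha hb] at h
  exact hle hc

section KerMulKer

variable {x y a b c : M}

theorem malcevProj_mul_act (hs : IsSlTwo μ L E H F) (hx : π x = 0) (hy : π y = 0) (hc : c ∈ L) :
    μ (π (μ x y)) c = (-2 : K) • (π (μ (μ x c) y) + π (μ x (μ y c))) := by
  have h := congrArg π (hs.leibniz_two_sub_three_malcevProj x y hc)
  simp only [hx, hy, smul_zero, sub_zero, hs.malcevProj_mul _ hc, map_add, map_sub, map_smul,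
    LinearMap.sub_apply, LinearMap.smul_apply, hs.malcevProj_malcevProj] at h
  linear_combination (norm := module) -h

theorem malcevProj_mul_act_balanced_self (hs : IsSlTwo μ L E H F) (hx : π x = 0) (hy : π y = 0)
    (ha : a ∈ L) : μ (π (μ (μ x a) y)) a = μ (π (μ x (μ y a))) a := by
  have hxa := hs.malcevProj_mul_eq_zero_of_mem hx ha
  have hya := hs.malcevProj_mul_eq_zero_of_mem hy ha
  have h := congrArg π (hs.isMalcev.mul_mul_self x y a)
  simp only [map_add, hs.malcevProj_mul _ ha] at h
  have h₁ := hs.malcevProj_mul_act hxa hy ha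
  have h₂ := hs.malcevProj_mul_act hx hya ha
  refine (smul_right_inj hs.three_ne_zero).1 ?_
  linear_combination (norm := module) (2 : K) • h + h₁ - h₂

theorem malcevProj_mul_balanced_H (hs : IsSlTwo μ L E H F) (hx : π x = 0) (hy : π y = 0) :
    π (μ (μ x H) y) = π (μ x (μ y H)) :=
  hs.malcevProj_eq_of_mul_H_eq (hs.malcevProj_mul_act_balanced_self hx hy hs.H_mem)

theorem malcevProj_mul_balanced (hs : IsSlTwo μ L E H F) (hx : π x = 0) (hy : π y = 0)
    (ha : a ∈ L) : π (μ (μ x a) y) = π (μ x (μ y a)) := by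
  refine hs.malcevProj_eq_of_mul_H_eq ?_
  have h := hs.malcevProj_mul_act_balanced_self hx hy (L.add_mem ha hs.H_mem)
  have hself := hs.malcevProj_mul_act_balanced_self hx hy ha
  simp only [map_add, LinearMap.add_apply, hs.malcevProj_mul_balanced_H hx hy] at h
  linear_combination (norm := module) h - hself

theorem malcevProj_mul_act_eq_smul (hs : IsSlTwo μ L E H F) (hx : π x = 0) (hy : π y = 0)
    (hc : c ∈ L) : μ (π (μ x y)) c = (-4 : K) • π (μ (μ x c) y) := by
  rw [hs.malcevProj_mul_act hx hy hc, hs.malcevProj_mul_balanced hx hy hc]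
  module

theorem malcevProj_mul_act_mul_eq_zero (hs : IsSlTwo μ L E H F) (hx : π x = 0) (hy : π y = 0)
    (ha : a ∈ L) (hb : b ∈ L) : μ (π (μ x y)) (μ a b) = 0 := by
  have hxa := hs.malcevProj_mul_eq_zero_of_mem hx ha
  have hxb := hs.malcevProj_mul_eq_zero_of_mem hx hb
  have hleft : μ (μ (π (μ x y)) a) b - μ (μ (π (μ x y)) b) a =
      (-4 : K) • μ (π (μ x y)) (μ a b) := by
    have hx_comm := hs.commutator_eq_of_malcevProj_eq_zero hx ha hb
    rw [hs.malcevProj_mul_act_eq_smul hx hy (hs.mul_mem ha hb), ← hx_comm,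
      hs.malcevProj_mul_act_eq_smul hx hy ha, hs.malcevProj_mul_act_eq_smul hx hy hb]
    simp only [map_smul, map_sub, LinearMap.smul_apply, LinearMap.sub_apply,
      hs.malcevProj_mul_act_eq_smul hxa hy hb, hs.malcevProj_mul_act_eq_smul hxb hy ha]
    module
  have hright := hs.commutator_eq_of_malcevProj_eq_self (hs.malcevProj_malcevProj (μ x y)) ha hb
  refine (smul_eq_zero_iff_right hs.two_ne_zero).1 ?_
  linear_combination (norm := module) hleft - hright

theorem malcevProj_mul_eq_zero (hs : IsSlTwo μ L E H F) (hx : π x = 0) (hy : π y = 0) :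
    π (μ x y) = 0 := by
  have hL : L ≤ LinearMap.ker (μ (π (μ x y))) := hs.le_of_forall_mul_mem fun _ ha _ hb =>
    hs.malcevProj_mul_act_mul_eq_zero hx hy ha hb
  have hH : μ (π (μ x y)) H = 0 := hL hs.H_mem
  rw [← hs.malcevProj_mul_H_mul_H, hH, map_zero, LinearMap.zero_apply]

end KerMulKer

section KerMulRange

variable {x y a b c : M}

theorem malcevCoproj_mul_act (hs : IsSlTwo μ L E H F) (hx : π x = 0) (hy : π y = y) (hc : c ∈ L) :
    (2 : K) • μ (ρ (μ x y)) c = (2 : K) • ρ (μ (μ x c) y) - ρ (μ x (μ y c)) := by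
  have h := congrArg ρ (hs.leibniz_two_sub_three_malcevProj x y hc)
  simp only [hx, hy, smul_zero, sub_zero, hs.malcevCoproj_mul _ hc, map_add, map_sub,
    map_smul, LinearMap.sub_apply, LinearMap.smul_apply, hs.malcevCoproj_malcevProj,
    map_zero, LinearMap.zero_apply] at h
  linear_combination (norm := module) h

theorem malcevCoproj_mul_mul_mul_self (hs : IsSlTwo μ L E H F) (hx : π x = 0) (hy : π y = y)
    (ha : a ∈ L) : ρ (μ (μ x a) (μ y a)) = ρ (μ x (μ (μ y a) a)) := by
  have hxa := hs.malcevProj_mul_eq_zero_of_mem hx ha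
  have hya := hs.malcevProj_mul_eq_self_of_mem hy ha
  have h := congrArg ρ (hs.isMalcev.mul_mul_self x y a)
  simp only [map_add, hs.malcevCoproj_mul _ ha] at h
  have h₁ := hs.malcevCoproj_mul_act hxa hy ha
  have h₂ := hs.malcevCoproj_mul_act hx hya ha
  refine (smul_right_inj hs.three_ne_zero).1 ?_
  linear_combination (norm := module) h₁ - h₂ - (2 : K) • h

theorem malcevCoproj_mul_balanced_H (hs : IsSlTwo μ L E H F) (hx : π x = 0) (hy : π y = y) :
    ρ (μ (μ x H) y) = ρ (μ x (μ y H)) := by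
  have hyH := hs.malcevProj_mul_eq_self_of_mem hy hs.H_mem
  have h := hs.malcevCoproj_mul_mul_mul_self hx hyH hs.H_mem
  rwa [hs.mul_H_mul_H_of_malcevProj_eq_self hy] at h

theorem malcevCoproj_mul_balanced (hs : IsSlTwo μ L E H F) (hx : π x = 0) (hy : π y = y)
    (ha : a ∈ L) : ρ (μ (μ x a) y) = ρ (μ x (μ y a)) := by
  have hyH := hs.malcevProj_mul_eq_self_of_mem hy hs.H_mem
  have h := hs.malcevCoproj_mul_mul_mul_self hx hyH (L.add_mem ha hs.H_mem)
  have hself := hs.malcevCoproj_mul_mul_mul_self hx hyH ha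
  have hbal := hs.malcevCoproj_mul_balanced_H hx (hs.malcevProj_mul_eq_self_of_mem hyH ha)
  have hbalH := hs.malcevCoproj_mul_balanced_H hx hy
  simp only [map_add, LinearMap.add_apply, hs.mul_H_mul_H_of_malcevProj_eq_self hy] at h
  linear_combination (norm := module) h - hself - hbal - hbalH

theorem two_smul_malcevCoproj_mul_act (hs : IsSlTwo μ L E H F) (hx : π x = 0) (hy : π y = y)
    (hc : c ∈ L) : (2 : K) • μ (ρ (μ x y)) c = ρ (μ x (μ y c)) := by
  rw [hs.malcevCoproj_mul_act hx hy hc, hs.malcevCoproj_mul_balanced hx hy hc]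
  module

theorem malcevCoproj_mul_act_mul_eq_zero (hs : IsSlTwo μ L E H F) (hx : π x = 0) (hy : π y = y)
    (ha : a ∈ L) (hb : b ∈ L) : μ (ρ (μ x y)) (μ a b) = 0 := by
  have hleft : (4 : K) • (μ (μ (ρ (μ x y)) a) b - μ (μ (ρ (μ x y)) b) a) =
      (-4 : K) • μ (ρ (μ x y)) (μ a b) := by
    have hact_act {a b : M} (ha : a ∈ L) (hb : b ∈ L) :
        (4 : K) • μ (μ (ρ (μ x y)) a) b = ρ (μ x (μ (μ y a) b)) := by
      have hya := hs.malcevProj_mul_eq_self_of_mem hy ha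
      rw [← hs.two_smul_malcevCoproj_mul_act hx hya hb,
        ← hs.two_smul_malcevCoproj_mul_act hx hy ha, map_smul, LinearMap.smul_apply]
      module
    have hy_comm := hs.commutator_eq_of_malcevProj_eq_self hy ha hb
    rw [smul_sub, hact_act ha hb, hact_act hb ha, ← map_sub, ← map_sub, hy_comm, map_smul, map_smul,
      ← hs.two_smul_malcevCoproj_mul_act hx hy (hs.mul_mem ha hb)]
    module
  have hright := hs.commutator_eq_of_malcevProj_eq_zero (hs.malcevProj_malcevCoproj (μ x y)) ha hb
  refine (smul_eq_zero_iff_right (pow_ne_zero 3 hs.two_ne_zero)).1 ?_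
  linear_combination (norm := module) hleft - (4 : K) • hright

theorem malcevCoproj_mul_eq_zero (hs : IsSlTwo μ L E H F) (hx : π x = 0) (hy : π y = y) :
    ρ (μ x y) = 0 := by
  have hyH := hs.malcevProj_mul_eq_self_of_mem hy hs.H_mem
  have hL : L ≤ LinearMap.ker (μ (ρ (μ x (μ y H)))) := hs.le_of_forall_mul_mem fun _ ha _ hb =>
    hs.malcevCoproj_mul_act_mul_eq_zero hx hyH ha hb
  have hH : μ (ρ (μ x (μ y H))) H = 0 := hL hs.H_mem
  rw [← hs.mul_H_mul_H_of_malcevProj_eq_self hy,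
    ← hs.two_smul_malcevCoproj_mul_act hx hyH hs.H_mem, hH, smul_zero]

theorem malcevProj_mul_eq_self (hs : IsSlTwo μ L E H F) (hx : π x = 0) (hy : π y = y) :
    π (μ x y) = μ x y :=
  (sub_eq_zero.1 (hs.malcevCoproj_mul_eq_zero hx hy)).symm

end KerMulRange

end IsSlTwo

end SlTwo

theorem stmt0_general (h2 : (2 : K) ≠ 0) (h3 : (3 : K) ≠ 0)
    (μ : M →ₗ[K] M →ₗ[K] M) (hMal : IsMalcev μ) (E H F : M)
    (hEH : μ E H = E) (hFH : μ F H = -F) (hEF : μ E F = (2⁻¹ : K) • H)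
    (L : Submodule K M) (hL : L = Submodule.span K {E, H, F}) :
    (∀ x ∈ NMset μ L, ∀ y ∈ NMset μ L, μ x y ∈ NMset μ L) ∧
    ((∀ m : M, m ≠ 0 → ∃ a ∈ L, μ m a ≠ 0) →
      ∀ x ∈ NMset μ L, ∀ y ∈ JMset μ L, μ x y ∈ JMset μ L) := by
  have hs : IsSlTwo μ L E H F := ⟨h2, h3, hMal, hL, hEH, hFH, hEF⟩
  refine ⟨fun x hx y hy => ?_, fun hfaith x hx y hy => ?_⟩
  · rw [hs.mem_NMset_iff] at hx hy ⊢
    exact hs.malcevProj_mul_eq_zero hx hy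
  · rw [hs.mem_NMset_iff] at hx
    rw [hs.mem_JMset_iff hfaith] at hy ⊢
    exact hs.malcevProj_mul_eq_self hx hy

/-- If `M` is a Malcev algebra in the variety 𝓗 containing
`L = sl₂(F)` (with basis `E, H, F`, `EH = E`, `FH = −F`, `EF = ½H`) and `mL ≠ 0`
for every nonzero `m ∈ M`, then `N_M` is a subalgebra of `M` and `N_M·J_M ⊆ J_M`. -/
theorem stmt0
    (h2 : (2 : K) ≠ 0) (h3 : (3 : K) ≠ 0)
    (μ : M →ₗ[K] M →ₗ[K] M) (hMal : IsMalcev μ) (hVarH : InVarietyH μ)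
    (E H F : M) (hind : LinearIndependent K ![E, H, F])
    (hEH : μ E H = E) (hFH : μ F H = -F) (hEF : μ E F = (2⁻¹ : K) • H)
    (L : Submodule K M) (hL : L = Submodule.span K {E, H, F})
    (hfaith : ∀ m : M, m ≠ 0 → ∃ a ∈ L, μ m a ≠ 0) :
    (∀ x ∈ NMset μ L, ∀ y ∈ NMset μ L, μ x y ∈ NMset μ L) ∧
    (∀ x ∈ NMset μ L, ∀ y ∈ JMset μ L, μ x y ∈ JMset μ L) :=
  (stmt0_general h2 h3 μ hMal E H F hEH hFH hEF L hL).imp_right fun h => h hfaith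

end
end

section
/- Let M be a Malcev algebra over F lying in the variety H, containing L = sl2(F), and such that mL ≠ 0 for every nonzero m ∈ M. Then for all u, v ∈ V there exists an element ⟨u,v⟩ of the commutative associative subalgebra U ⊆ Γ(M) (with N_M = L·U) such that u(1)v(1) = F⟨u,v⟩, u(1)v(2) = u(2)v(1) = (1/2)H⟨u,v⟩, and u(2)v(2) = E⟨u,v⟩; in particular V_2(u)·V_2(v) ⊆ L⟨u,v⟩ where V_2(w) = span{w(1), w(2)}. Moreover the map (u,v) ↦ ⟨u,v⟩ is F-bilinear and skew-symmetric (⟨u,v⟩ = −⟨v,u⟩), and V_2(v)·V_2(v) = 0 for every v ∈ V. -/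
/-!
The Malcev identity, evaluated on `u(i)`, `v(j)` and two basis elements of `sl₂`, shows that
`f = u(1)v(1)` is a lowest weight vector of a copy of the adjoint module, with `F`, `H`, `E`
corresponding to `u(1)v(1)`, `2 u(1)v(2) = 2 u(2)v(1)` and `u(2)v(2)`. For such an `f` the operator
`p(·, f, E, H)` is `-3` times the embedding of `sl₂` onto this copy, so
`⟨u,v⟩ = -⅓ p(·, uv, E, H)`, which is visibly bilinear and alternating in `(u, v)`.
-/

section
variable {K : Type*} [Field K] {M : Type*} [AddCommGroup M] [Module K M]

/-- the centroid Γ(M): linear operators commuting with all multiplications -/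
def centroid (μ : M →ₗ[K] M →ₗ[K] M) : Set (Module.End K M) :=
  {α | ∀ x y : M, α (μ x y) = μ x (α y) ∧ α (μ x y) = μ (α x) y}

/-- `p(x,y,z,t) = −{zt,x,y} − {yt,z,x} + {xt,y,z}` -/
def pfun (μ : M →ₗ[K] M →ₗ[K] M) (x y z t : M) : M :=
  -(mbr μ (μ z t) x y) - mbr μ (μ y t) z x + mbr μ (μ x t) y z

/-- `U`: the span of the operators `α(y,a,b) : x ↦ p(x,y,a,b)` with `y ∈ M`, `a,b ∈ L` -/
def Uspan (μ : M →ₗ[K] M →ₗ[K] M) (L : Submodule K M) : Submodule K (Module.End K M) :=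
  Submodule.span K {φ : Module.End K M | ∃ y : M, ∃ a ∈ L, ∃ b ∈ L, ∀ x, φ x = pfun μ x y a b}

/-- `N_M = L·U`: the span of the elements `aα`, `a ∈ L`, `α ∈ U` -/
def NMspan (μ : M →ₗ[K] M →ₗ[K] M) (L : Submodule K M) : Submodule K M :=
  Submodule.span K {m : M | ∃ a ∈ L, ∃ φ ∈ Uspan μ L, m = φ a}

/-- the linear operator `m ↦ J(m,a,b)` -/
def jop (μ : M →ₗ[K] M →ₗ[K] M) (a b : M) : M →ₗ[K] M :=
  μ.flip b ∘ₗ μ.flip a + μ (μ a b) + μ.flip a ∘ₗ μ b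

/-- the linear operator `m ↦ {m,a,b}` -/
def bop (μ : M →ₗ[K] M →ₗ[K] M) (a b : M) : M →ₗ[K] M :=
  μ.flip b ∘ₗ μ.flip a - μ.flip a ∘ₗ μ.flip b + (2 : K) • μ.flip (μ a b)

/-- `N_M` as a submodule (intersection of the kernels of `m ↦ J(m,a,b)`, `a,b ∈ L`) -/
def NMker (μ : M →ₗ[K] M →ₗ[K] M) (L : Submodule K M) : Submodule K M :=
  ⨅ (a : M) (_ : a ∈ L) (b : M) (_ : b ∈ L), LinearMap.ker (jop μ a b)

/-- `J_M` as a submodule (intersection of the kernels of `m ↦ {m,a,b}`, `a,b ∈ L`) -/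
def JMker (μ : M →ₗ[K] M →ₗ[K] M) (L : Submodule K M) : Submodule K M :=
  ⨅ (a : M) (_ : a ∈ L) (b : M) (_ : b ∈ L), LinearMap.ker (bop μ a b)

/-- `Ann_M L` as a set -/
def AnnSet (μ : M →ₗ[K] M →ₗ[K] M) (L : Submodule K M) : Set M :=
  {m : M | ∀ a ∈ L, μ m a = 0}

/-- `Ann_M L` as a submodule -/
def Annker (μ : M →ₗ[K] M →ₗ[K] M) (L : Submodule K M) : Submodule K M :=
  ⨅ (a : M) (_ : a ∈ L), LinearMap.ker (μ.flip a)

/-- `V = {w ∈ J_M : wH = w, wF = 0}` as a set -/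
def Vset (μ : M →ₗ[K] M →ₗ[K] M) (L : Submodule K M) (Hm Fm : M) : Set M :=
  {w : M | w ∈ JMset μ L ∧ μ w Hm = w ∧ μ w Fm = 0}

/-- `V = {w ∈ J_M : wH = w, wF = 0}` as a submodule -/
def Vsub (μ : M →ₗ[K] M →ₗ[K] M) (L : Submodule K M) (Hm Fm : M) : Submodule K M :=
  JMker μ L ⊓ LinearMap.ker (μ.flip Hm - LinearMap.id) ⊓ LinearMap.ker (μ.flip Fm)

/-- The multiplication table of `sl₂` in the basis used here. The relation `EF = ½H` is stored
without a denominator; linear independence is not part of the notion. -/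
structure IsSlTwoTriple (μ : M →ₗ[K] M →ₗ[K] M) (E H F : M) : Prop where
  E_mul_H : μ E H = E
  F_mul_H : μ F H = -F
  two_smul_E_mul_F : (2 : K) • μ E F = H

/-- `(u₁, u₂)` satisfies the multiplication table of the two-dimensional non-Lie Malcev module
`V₂` over `sl₂`, where `u₁ = u(1)` and `u₂ = u(2)`; the vectors may vanish. -/
structure IsNonLieBasis (μ : M →ₗ[K] M →ₗ[K] M) (E H F u₁ u₂ : M) : Prop where
  fst_mul_E : μ u₁ E = u₂
  fst_mul_H : μ u₁ H = u₁
  fst_mul_F : μ u₁ F = 0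
  snd_mul_E : μ u₂ E = 0
  snd_mul_H : μ u₂ H = -u₂
  snd_mul_F : μ u₂ F = -u₁

/-- The map `y ↦ (x ↦ p(x,y,a,b))`, whose values for `a, b ∈ L` span `U`. -/
def pOperator (μ : M →ₗ[K] M →ₗ[K] M) (a b : M) : M →ₗ[K] Module.End K M :=
  LinearMap.mk₂ K (fun y x ↦ pfun μ x y a b)
    (fun y y' x ↦ by simp only [pfun, mbr, map_add, LinearMap.add_apply]; module)
    (fun c y x ↦ by simp only [pfun, mbr, map_smul, LinearMap.smul_apply]; module)
    (fun y x x' ↦ by simp only [pfun, mbr, map_add, LinearMap.add_apply]; module)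
    (fun c y x ↦ by simp only [pfun, mbr, map_smul, LinearMap.smul_apply]; module)

/-- The bracket `⟨u,v⟩ = -⅓ p(·, uv, E, H)`, defined for all `u, v ∈ M`. -/
def productBracket (μ : M →ₗ[K] M →ₗ[K] M) (E H : M) : M →ₗ[K] M →ₗ[K] Module.End K M :=
  (-3⁻¹ : K) • μ.compr₂ (pOperator μ E H)

variable {μ : M →ₗ[K] M →ₗ[K] M} {E H F u₁ u₂ v₁ v₂ : M} {L : Submodule K M}

lemma productBracket_apply (u v x : M) :
    productBracket μ E H u v x = (-3⁻¹ : K) • pfun μ x (μ u v) E H := rfl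

lemma productBracket_mem_Uspan (hE : E ∈ L) (hH : H ∈ L) (u v : M) :
    productBracket μ E H u v ∈ Uspan μ L :=
  Submodule.smul_mem _ _ (Submodule.subset_span ⟨μ u v, E, hE, H, hH, fun _ ↦ rfl⟩)

lemma productBracket_isAlt (hμ : μ.IsAlt) : (productBracket μ E H).IsAlt := fun u ↦ by
  simp only [productBracket, LinearMap.smul_apply, LinearMap.compr₂_apply, hμ u, map_zero,
    smul_zero]

lemma IsSlTwoTriple.two_smul_F_mul_E (hμ : μ.IsAlt) (hS : IsSlTwoTriple μ E H F) :
    (2 : K) • μ F E = -H := by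
  rw [← hμ.neg, smul_neg, hS.two_smul_E_mul_F]

namespace IsMalcev

lemma isAlt (hM : IsMalcev μ) : μ.IsAlt := hM.1

lemma product_mul_product (hM : IsMalcev μ) (u v a b : M) :
    μ (μ u v) (μ a b) = μ (μ (μ u a) v) b + μ u (μ (μ v a) b) - μ (μ u (μ v b)) a
      - μ (μ (μ u b) a) v := by
  rw [hM.2 u a v b, ← hM.isAlt.neg v a, ← hM.isAlt.neg u (μ v b), ← hM.isAlt.neg u b,
    ← hM.isAlt.neg u (μ (-μ v a) b)]
  simp only [map_neg, LinearMap.neg_apply]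
  abel

lemma mul_right_product_mul_right (hM : IsMalcev μ) (u v a b : M) :
    μ (μ u a) (μ v b) = μ (μ (μ u v) a) b - μ u (μ (μ v a) b) - μ (μ u (μ a b)) v
      - μ (μ (μ u b) v) a := by
  rw [hM.2 u v a b, ← hM.isAlt.neg u (μ (μ v a) b), ← hM.isAlt.neg u (μ a b),
    ← hM.isAlt.neg u b]
  simp only [map_neg, LinearMap.neg_apply]
  abel

lemma mul_E_mul_E_eq_zero (h3 : (3 : K) ≠ 0) (hM : IsMalcev μ) (hEH : μ E H = E) {u : M}
    (huH : μ u H = u) (huEH : μ (μ u E) H = -μ u E) : μ (μ u E) E = 0 := by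
  have hHE : μ H E = -E := by rw [← hM.isAlt.neg, hEH]
  have weight_zero : μ (μ (μ u E) E) H = 0 := by
    have h := hM.product_mul_product u H E E
    simp only [hM.isAlt E, hHE, huEH, map_neg, map_zero, LinearMap.neg_apply] at h
    linear_combination (norm := module) h
  have weight_three : μ (μ (μ u E) E) H = (3 : K) • μ (μ u E) E := by
    have h := hM.mul_right_product_mul_right u E E H
    simp only [hM.isAlt E, hEH, huH, map_zero, LinearMap.zero_apply] at h
    linear_combination (norm := module) -h
  exact (smul_eq_zero.mp (weight_three.symm.trans weight_zero)).resolve_left h3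

end IsMalcev

namespace IsNonLieBasis

lemma of_mem_Vset (h3 : (3 : K) ≠ 0) (hM : IsMalcev μ) (hS : IsSlTwoTriple μ E H F)
    (hE : E ∈ L) (hH : H ∈ L) (hF : F ∈ L) {u : M} (hu : u ∈ Vset μ L H F) :
    IsNonLieBasis μ E H F u (μ u E) := by
  obtain ⟨hJ, huH, huF⟩ := hu
  have huEH : μ (μ u E) H = -μ u E := by
    have h := hJ E hE H hH
    rw [mbr, hS.E_mul_H, huH] at h
    linear_combination (norm := module) h
  have huEF : μ (μ u E) F = -u := by
    have h := hJ E hE F hF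
    rw [mbr, ← map_smul, hS.two_smul_E_mul_F, huH, huF, map_zero, LinearMap.zero_apply,
      sub_zero] at h
    exact eq_neg_of_add_eq_zero_left h
  exact ⟨rfl, huH, huF, hM.mul_E_mul_E_eq_zero h3 hS.E_mul_H huH huEH, huEH, huEF⟩

lemma fst_mul_fst_mul_F (hM : IsMalcev μ) (hu : IsNonLieBasis μ E H F u₁ u₂)
    (hv : IsNonLieBasis μ E H F v₁ v₂) : μ (μ u₁ v₁) F = 0 := by
  have h := hM.product_mul_product u₁ v₂ F F
  simp only [hM.isAlt F, hu.fst_mul_F, hv.snd_mul_F, hv.fst_mul_F, map_neg, map_zero,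
    LinearMap.neg_apply, LinearMap.zero_apply] at h
  linear_combination (norm := module) -h

lemma fst_mul_fst_mul_H (hM : IsMalcev μ) (hS : IsSlTwoTriple μ E H F)
    (hu : IsNonLieBasis μ E H F u₁ u₂) (hv : IsNonLieBasis μ E H F v₁ v₂) :
    μ (μ u₁ v₁) H = -μ u₁ v₁ := by
  have h := hM.product_mul_product u₂ v₁ F H
  simp only [hS.F_mul_H, hu.snd_mul_F, hu.snd_mul_H, hv.fst_mul_F, hv.fst_mul_H, map_neg, map_zero,
    LinearMap.neg_apply, LinearMap.zero_apply] at h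
  linear_combination (norm := module) h

lemma fst_mul_snd_mul_H (h2 : (2 : K) ≠ 0) (hM : IsMalcev μ)
    (hu : IsNonLieBasis μ E H F u₁ u₂) (hv : IsNonLieBasis μ E H F v₁ v₂) :
    μ (μ u₁ v₂) H = 0 := by
  have h := hM.product_mul_product u₁ v₂ H H
  simp only [hM.isAlt H, hu.fst_mul_H, hv.snd_mul_H, map_neg, map_zero, LinearMap.neg_apply] at h
  have htwo : (2 : K) • μ (μ u₁ v₂) H = 0 := by linear_combination (norm := module) -h
  exact (smul_eq_zero.mp htwo).resolve_left h2

lemma snd_mul_snd_mul_H (hM : IsMalcev μ) (hS : IsSlTwoTriple μ E H F)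
    (hu : IsNonLieBasis μ E H F u₁ u₂) (hv : IsNonLieBasis μ E H F v₁ v₂) :
    μ (μ u₂ v₂) H = μ u₂ v₂ := by
  have h := hM.product_mul_product u₁ v₂ E H
  simp only [hS.E_mul_H, hu.fst_mul_E, hu.fst_mul_H, hv.snd_mul_E, hv.snd_mul_H, map_neg, map_zero,
    LinearMap.neg_apply, LinearMap.zero_apply] at h
  linear_combination (norm := module) -h

lemma two_smul_fst_mul_snd_mul_F (hM : IsMalcev μ) (hS : IsSlTwoTriple μ E H F)
    (hu : IsNonLieBasis μ E H F u₁ u₂) (hv : IsNonLieBasis μ E H F v₁ v₂) :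
    (2 : K) • μ (μ u₁ v₂) F = μ u₁ v₁ := by
  have h := hM.product_mul_product u₁ v₁ F E
  simp only [hu.fst_mul_F, hu.fst_mul_E, hu.snd_mul_F, hv.fst_mul_F, hv.fst_mul_E, map_neg,
    map_zero, LinearMap.neg_apply, LinearMap.zero_apply] at h
  have hFE := congrArg (μ (μ u₁ v₁)) (hS.two_smul_F_mul_E hM.isAlt)
  rw [map_smul, map_neg, fst_mul_fst_mul_H hM hS hu hv] at hFE
  linear_combination (norm := module) (2 : K) • h - hFE

lemma two_smul_fst_mul_snd_mul_E (hM : IsMalcev μ) (hS : IsSlTwoTriple μ E H F)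
    (hu : IsNonLieBasis μ E H F u₁ u₂) (hv : IsNonLieBasis μ E H F v₁ v₂) :
    (2 : K) • μ (μ u₁ v₂) E = -μ u₂ v₂ := by
  have h := hM.product_mul_product u₂ v₂ F E
  simp only [hu.snd_mul_E, hu.snd_mul_F, hv.snd_mul_E, hv.snd_mul_F, hv.fst_mul_E, map_neg,
    map_zero, LinearMap.neg_apply, LinearMap.zero_apply] at h
  have hFE := congrArg (μ (μ u₂ v₂)) (hS.two_smul_F_mul_E hM.isAlt)
  rw [map_smul, map_neg, snd_mul_snd_mul_H hM hS hu hv] at hFE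
  linear_combination (norm := module) (2 : K) • h - hFE

lemma two_smul_snd_mul_fst_mul_F (hM : IsMalcev μ) (hS : IsSlTwoTriple μ E H F)
    (hu : IsNonLieBasis μ E H F u₁ u₂) (hv : IsNonLieBasis μ E H F v₁ v₂) :
    (2 : K) • μ (μ u₂ v₁) F = μ u₁ v₁ := by
  rw [← hM.isAlt.neg v₁ u₂, ← hM.isAlt.neg v₁ u₁, map_neg, LinearMap.neg_apply, smul_neg,
    two_smul_fst_mul_snd_mul_F hM hS hv hu]

lemma two_smul_fst_mul_fst_mul_E (h2 : (2 : K) ≠ 0) (hM : IsMalcev μ)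
    (hS : IsSlTwoTriple μ E H F) (hu : IsNonLieBasis μ E H F u₁ u₂)
    (hv : IsNonLieBasis μ E H F v₁ v₂) :
    (2 : K) • μ (μ u₁ v₁) E = -(μ u₁ v₂ + μ u₂ v₁) := by
  have hHE : μ H E = -E := by rw [← hM.isAlt.neg, hS.E_mul_H]
  have h := hM.product_mul_product u₁ v₁ H E
  simp only [hHE, hu.fst_mul_E, hu.fst_mul_H, hv.fst_mul_E, hv.fst_mul_H, hu.snd_mul_H, map_neg,
    LinearMap.neg_apply, fst_mul_snd_mul_H h2 hM hu hv] at h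
  linear_combination (norm := module) -h

lemma fst_mul_fst_mul_E_eq_sub (hM : IsMalcev μ) (hS : IsSlTwoTriple μ E H F)
    (hu : IsNonLieBasis μ E H F u₁ u₂) (hv : IsNonLieBasis μ E H F v₁ v₂) :
    μ (μ u₁ v₁) E = μ u₂ v₁ - (2 : K) • μ u₁ v₂ := by
  have h := hM.mul_right_product_mul_right u₂ v₁ F E
  simp only [hu.snd_mul_E, hu.snd_mul_F, hv.fst_mul_E, hv.fst_mul_F, map_neg, map_zero,
    LinearMap.neg_apply, LinearMap.zero_apply] at h
  have hFE := congrArg (fun z ↦ μ (μ u₂ z) v₁) (hS.two_smul_F_mul_E hM.isAlt)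
  simp only [map_smul, map_neg, LinearMap.smul_apply, LinearMap.neg_apply, hu.snd_mul_H] at hFE
  have hF := congrArg (μ · E) (two_smul_snd_mul_fst_mul_F hM hS hu hv)
  simp only [map_smul, LinearMap.smul_apply] at hF
  linear_combination (norm := module) -hF - (2 : K) • h + hFE

lemma snd_mul_fst_eq_fst_mul_snd (h2 : (2 : K) ≠ 0) (h3 : (3 : K) ≠ 0) (hM : IsMalcev μ)
    (hS : IsSlTwoTriple μ E H F) (hu : IsNonLieBasis μ E H F u₁ u₂)
    (hv : IsNonLieBasis μ E H F v₁ v₂) : μ u₂ v₁ = μ u₁ v₂ := by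
  have hthree : (3 : K) • (μ u₂ v₁ - μ u₁ v₂) = 0 := by
    linear_combination (norm := module) two_smul_fst_mul_fst_mul_E h2 hM hS hu hv
      - (2 : K) • fst_mul_fst_mul_E_eq_sub hM hS hu hv
  exact sub_eq_zero.mp ((smul_eq_zero.mp hthree).resolve_left h3)

lemma fst_mul_fst_mul_E (h2 : (2 : K) ≠ 0) (h3 : (3 : K) ≠ 0) (hM : IsMalcev μ)
    (hS : IsSlTwoTriple μ E H F) (hu : IsNonLieBasis μ E H F u₁ u₂)
    (hv : IsNonLieBasis μ E H F v₁ v₂) : μ (μ u₁ v₁) E = -μ u₁ v₂ := by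
  rw [fst_mul_fst_mul_E_eq_sub hM hS hu hv, snd_mul_fst_eq_fst_mul_snd h2 h3 hM hS hu hv]
  module

end IsNonLieBasis

section AdjointEmbedding

variable {f : M}

lemma pfun_E_of_mul_H_eq_neg (hμ : μ.IsAlt) (hEH : μ E H = E) (hfH : μ f H = -f) :
    pfun μ E f E H = (-6 : K) • μ (μ f E) E := by
  simp only [pfun, mbr, hEH, hfH, hμ E, ← hμ.neg f E, ← hμ.neg (μ f E) E, map_neg, map_zero,
    LinearMap.neg_apply, LinearMap.zero_apply]
  module

lemma pfun_H_of_mul_H_eq_neg (hμ : μ.IsAlt) (hEH : μ E H = E) (hfH : μ f H = -f) :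
    pfun μ H f E H = (6 : K) • μ f E := by
  simp only [pfun, mbr, hEH, hfH, hμ H, ← hμ.neg f E, ← hμ.neg f H, map_neg, map_zero,
    LinearMap.neg_apply, LinearMap.zero_apply]
  module

lemma pfun_F_of_mul_H_eq_neg (hμ : μ.IsAlt) (hS : IsSlTwoTriple μ E H F) (hfH : μ f H = -f)
    (hfF : μ f F = 0) (hfEF : (2 : K) • μ (μ f E) F = -f) :
    pfun μ F f E H = (-3 : K) • f := by
  have hf_mul_EF : (2 : K) • μ f (μ E F) = -f := by rw [← map_smul, hS.two_smul_E_mul_F, hfH]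
  simp only [pfun, mbr, hS.E_mul_H, hS.F_mul_H, hfH, hfF, ← hμ.neg f E, ← hμ.neg f F,
    ← hμ.neg E F, ← hμ.neg f (μ E F), ← hμ.neg (μ f E) F, map_neg, map_zero,
    LinearMap.neg_apply, LinearMap.zero_apply]
  linear_combination (norm := module) (2 : K) • hf_mul_EF + hfEF

end AdjointEmbedding

namespace IsNonLieBasis

lemma productBracket_F (h2 : (2 : K) ≠ 0) (h3 : (3 : K) ≠ 0) (hM : IsMalcev μ)
    (hS : IsSlTwoTriple μ E H F) (hu : IsNonLieBasis μ E H F u₁ u₂)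
    (hv : IsNonLieBasis μ E H F v₁ v₂) : productBracket μ E H u₁ v₁ F = μ u₁ v₁ := by
  have hEF : (2 : K) • μ (μ (μ u₁ v₁) E) F = -μ u₁ v₁ := by
    rw [fst_mul_fst_mul_E h2 h3 hM hS hu hv, map_neg, LinearMap.neg_apply, smul_neg,
      two_smul_fst_mul_snd_mul_F hM hS hu hv]
  rw [productBracket_apply, pfun_F_of_mul_H_eq_neg hM.isAlt hS (fst_mul_fst_mul_H hM hS hu hv)
      (fst_mul_fst_mul_F hM hu hv) hEF,
    neg_smul, neg_smul, smul_neg, neg_neg, inv_smul_smul₀ h3]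

lemma productBracket_H (h2 : (2 : K) ≠ 0) (h3 : (3 : K) ≠ 0) (hM : IsMalcev μ)
    (hS : IsSlTwoTriple μ E H F) (hu : IsNonLieBasis μ E H F u₁ u₂)
    (hv : IsNonLieBasis μ E H F v₁ v₂) :
    productBracket μ E H u₁ v₁ H = (2 : K) • μ u₁ v₂ := by
  have hfE : (6 : K) • μ (μ u₁ v₁) E = (3 : K) • -((2 : K) • μ u₁ v₂) := by
    rw [fst_mul_fst_mul_E h2 h3 hM hS hu hv]
    module
  rw [productBracket_apply,
    pfun_H_of_mul_H_eq_neg hM.isAlt hS.E_mul_H (fst_mul_fst_mul_H hM hS hu hv), hfE,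
    neg_smul, inv_smul_smul₀ h3, neg_neg]

lemma productBracket_E (h2 : (2 : K) ≠ 0) (h3 : (3 : K) ≠ 0) (hM : IsMalcev μ)
    (hS : IsSlTwoTriple μ E H F) (hu : IsNonLieBasis μ E H F u₁ u₂)
    (hv : IsNonLieBasis μ E H F v₁ v₂) : productBracket μ E H u₁ v₁ E = μ u₂ v₂ := by
  have hEE : (-6 : K) • μ (μ (μ u₁ v₁) E) E = (3 : K) • -μ u₂ v₂ := by
    rw [fst_mul_fst_mul_E h2 h3 hM hS hu hv, ← two_smul_fst_mul_snd_mul_E hM hS hu hv, map_neg,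
      LinearMap.neg_apply]
    module
  rw [productBracket_apply,
    pfun_E_of_mul_H_eq_neg hM.isAlt hS.E_mul_H (fst_mul_fst_mul_H hM hS hu hv), hEE,
    neg_smul, inv_smul_smul₀ h3, neg_neg]

lemma products_eq_productBracket (h2 : (2 : K) ≠ 0) (h3 : (3 : K) ≠ 0) (hM : IsMalcev μ)
    (hS : IsSlTwoTriple μ E H F) (hu : IsNonLieBasis μ E H F u₁ u₂)
    (hv : IsNonLieBasis μ E H F v₁ v₂) :
    μ u₁ v₁ = productBracket μ E H u₁ v₁ F ∧
      μ u₁ v₂ = (2⁻¹ : K) • productBracket μ E H u₁ v₁ H ∧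
      μ u₂ v₁ = (2⁻¹ : K) • productBracket μ E H u₁ v₁ H ∧
      μ u₂ v₂ = productBracket μ E H u₁ v₁ E := by
  rw [productBracket_F h2 h3 hM hS hu hv, productBracket_H h2 h3 hM hS hu hv,
    productBracket_E h2 h3 hM hS hu hv, inv_smul_smul₀ h2,
    snd_mul_fst_eq_fst_mul_snd h2 h3 hM hS hu hv]
  exact ⟨rfl, rfl, rfl, rfl⟩

end IsNonLieBasis

lemma exists_mem_mul_eq_of_mem_span_pair (hE : E ∈ L) (hH : H ∈ L) (hF : F ∈ L)
    {φ : Module.End K M} (h₁₁ : μ u₁ v₁ = φ F) (h₁₂ : μ u₁ v₂ = (2⁻¹ : K) • φ H)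
    (h₂₁ : μ u₂ v₁ = (2⁻¹ : K) • φ H) (h₂₂ : μ u₂ v₂ = φ E) {x y : M}
    (hx : x ∈ Submodule.span K {u₁, u₂}) (hy : y ∈ Submodule.span K {v₁, v₂}) :
    ∃ a ∈ L, μ x y = φ a := by
  obtain ⟨a, b, rfl⟩ := Submodule.mem_span_pair.mp hx
  obtain ⟨c, d, rfl⟩ := Submodule.mem_span_pair.mp hy
  refine ⟨(a * c) • F + ((a * d + b * c) * 2⁻¹) • H + (b * d) • E,
    add_mem (add_mem (L.smul_mem _ hF) (L.smul_mem _ hH)) (L.smul_mem _ hE), ?_⟩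
  simp only [map_add, map_smul, LinearMap.add_apply, LinearMap.smul_apply, h₁₁, h₁₂, h₂₁, h₂₂]
  module

theorem stmt7_general
    (h2 : (2 : K) ≠ 0) (h3 : (3 : K) ≠ 0)
    (μ : M →ₗ[K] M →ₗ[K] M) (hMal : IsMalcev μ) (E H F : M)
    (hEH : μ E H = E) (hFH : μ F H = -F) (hEF : μ E F = (2⁻¹ : K) • H)
    (L : Submodule K M) (hL : Submodule.span K {E, H, F} ≤ L) :
    ∃ bk : M →ₗ[K] M →ₗ[K] Module.End K M, bk.IsAlt ∧
      (∀ u ∈ Vset μ L H F, ∀ v ∈ Vset μ L H F,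
        bk u v ∈ Uspan μ L ∧
        μ u v = bk u v F ∧
        μ u (μ v E) = (2⁻¹ : K) • (bk u v H) ∧
        μ (μ u E) v = (2⁻¹ : K) • (bk u v H) ∧
        μ (μ u E) (μ v E) = bk u v E) ∧
      (∀ u ∈ Vset μ L H F, ∀ v ∈ Vset μ L H F,
        ∀ x ∈ Submodule.span K {u, μ u E}, ∀ y ∈ Submodule.span K {v, μ v E},
          ∃ a ∈ L, μ x y = bk u v a) ∧
      (∀ v ∈ Vset μ L H F,
        ∀ x ∈ Submodule.span K {v, μ v E}, ∀ y ∈ Submodule.span K {v, μ v E}, μ x y = 0) := by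
  have hE : E ∈ L := hL (Submodule.subset_span (by simp))
  have hH : H ∈ L := hL (Submodule.subset_span (by simp))
  have hF : F ∈ L := hL (Submodule.subset_span (by simp))
  have hS : IsSlTwoTriple μ E H F := ⟨hEH, hFH, by rw [hEF, smul_inv_smul₀ h2]⟩
  have basis_of_mem {u} (hu : u ∈ Vset μ L H F) : IsNonLieBasis μ E H F u (μ u E) :=
    .of_mem_Vset h3 hMal hS hE hH hF hu
  have products {u v} (hu : u ∈ Vset μ L H F) (hv : v ∈ Vset μ L H F) :=
    (basis_of_mem hu).products_eq_productBracket h2 h3 hMal hS (basis_of_mem hv)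
  have span_products {u v x y} (hu : u ∈ Vset μ L H F) (hv : v ∈ Vset μ L H F)
      (hx : x ∈ Submodule.span K {u, μ u E}) (hy : y ∈ Submodule.span K {v, μ v E}) :
      ∃ a ∈ L, μ x y = productBracket μ E H u v a := by
    obtain ⟨h₁₁, h₁₂, h₂₁, h₂₂⟩ := products hu hv
    exact exists_mem_mul_eq_of_mem_span_pair hE hH hF h₁₁ h₁₂ h₂₁ h₂₂ hx hy
  have hAlt := productBracket_isAlt (E := E) (H := H) hMal.isAlt
  refine ⟨productBracket μ E H, hAlt,
    fun u hu v hv ↦ ⟨productBracket_mem_Uspan hE hH u v, products hu hv⟩,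
    fun u hu v hv x hx y hy ↦ span_products hu hv hx hy, fun v hv x hx y hy ↦ ?_⟩
  obtain ⟨a, -, ha⟩ := span_products hv hv hx hy
  rw [ha, hAlt v, LinearMap.zero_apply]


/-- The products of the 2-dimensional modules `V₂(u)` and `V₂(v)`
are coordinatized by a skew-symmetric bilinear map `⟨·,·⟩ : V × V → U`:
`u(1)v(1) = F⟨u,v⟩`, `u(1)v(2) = u(2)v(1) = ½H⟨u,v⟩`, `u(2)v(2) = E⟨u,v⟩`;
in particular `V₂(u)·V₂(v) ⊆ L⟨u,v⟩` and `V₂(v)² = 0`. -/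
theorem stmt7
    (h2 : (2 : K) ≠ 0) (h3 : (3 : K) ≠ 0)
    (μ : M →ₗ[K] M →ₗ[K] M) (hMal : IsMalcev μ) (hVarH : InVarietyH μ)
    (E H F : M) (hind : LinearIndependent K ![E, H, F])
    (hEH : μ E H = E) (hFH : μ F H = -F) (hEF : μ E F = (2⁻¹ : K) • H)
    (L : Submodule K M) (hL : L = Submodule.span K {E, H, F})
    (hfaith : ∀ m : M, m ≠ 0 → ∃ a ∈ L, μ m a ≠ 0) :
    ∃ bk : M → M → Module.End K M,
      (∀ u ∈ Vset μ L H F, ∀ v ∈ Vset μ L H F,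
        bk u v ∈ Uspan μ L ∧
        μ u v = bk u v F ∧
        μ u (μ v E) = (2⁻¹ : K) • (bk u v H) ∧
        μ (μ u E) v = (2⁻¹ : K) • (bk u v H) ∧
        μ (μ u E) (μ v E) = bk u v E) ∧
      (∀ u ∈ Vset μ L H F, ∀ v ∈ Vset μ L H F, bk u v = -(bk v u)) ∧
      (∀ u ∈ Vset μ L H F, ∀ u' ∈ Vset μ L H F, ∀ v ∈ Vset μ L H F,
        bk (u + u') v = bk u v + bk u' v) ∧
      (∀ (c : K), ∀ u ∈ Vset μ L H F, ∀ v ∈ Vset μ L H F, bk (c • u) v = c • bk u v) ∧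
      (∀ u ∈ Vset μ L H F, ∀ v ∈ Vset μ L H F,
        ∀ x ∈ Submodule.span K {u, μ u E}, ∀ y ∈ Submodule.span K {v, μ v E},
          ∃ a ∈ L, μ x y = bk u v a) ∧
      (∀ v ∈ Vset μ L H F,
        ∀ x ∈ Submodule.span K {v, μ v E}, ∀ y ∈ Submodule.span K {v, μ v E}, μ x y = 0) := by
  obtain ⟨bk, alt, prod, span, sq⟩ := stmt7_general h2 h3 μ hMal E H F hEH hFH hEF L hL.ge
  exact ⟨(bk · ·), prod, fun u _ v _ ↦ (alt.neg v u).symm, fun u _ u' _ v _ ↦ bk.map_add₂ u u' v,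
    fun c u _ v _ ↦ bk.map_smul₂ c u v, span, sq⟩

end
end
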